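/- Every matrix over a commutative ring R in which every ideal is principal admits a Smith normal form: for any m×n matrix M over R there exist invertible P ∈ GL_m(R) and Q ∈ GL_n(R) such that PMQ is diagonal with diagonal entries d_1, ..., d_r, 0, ..., 0 satisfying d_i | d_{i+1}. -/

import Mathlib

namespace SNFaux

theorem avoid {R : Type*} [CommRing R] (S : Finset (Ideal R)) (hS : ∀ P ∈ S, P.IsPrime)
    (hanti : ∀ P ∈ S, ∀ Q ∈ S, P ≤ Q → P = Q) (b c : R)
    (h : ∀ P ∈ S, b ∈ P → c ∉ P) : ∃ t, ∀ P ∈ S, b + c * t ∉ P := by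
  classical
  have key : ¬ (((S.filter (fun P => b ∉ P)).inf id : Ideal R) : Set R) ⊆
      ⋃ Q ∈ ((S.filter (fun P => b ∈ P) : Finset (Ideal R)) : Set (Ideal R)), (id Q : Ideal R) := by
    rw [Ideal.subset_union_prime (f := id) ⊥ ⊥ (fun i hi _ _ => hS i (Finset.mem_filter.1 hi).1)]
    rintro ⟨Q, hQ, hle⟩
    rw [Finset.mem_filter] at hQ
    obtain ⟨P, hP, hPQ⟩ := (Ideal.IsPrime.inf_le' (hS Q hQ.1)).1 hle
    rw [Finset.mem_filter] at hP
    have := hanti P hP.1 Q hQ.1 hPQ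
    subst this
    exact hP.2 hQ.2
  obtain ⟨t, ht, ht'⟩ := Set.not_subset.1 key
  refine ⟨t, fun P hP hmem => ?_⟩
  by_cases hb : b ∈ P
  · have hct : c * t ∈ P := (Ideal.add_mem_iff_right P hb).1 hmem
    rcases (hS P hP).mem_or_mem hct with hc | htP
    · exact h P hP hb hc
    · apply ht'
      simp only [Set.mem_iUnion]
      exact ⟨P, by simp [hP, hb], htP⟩
  · have htP : t ∈ P :=
      (Finset.inf_le (f := id) (Finset.mem_filter.2 ⟨hP, hb⟩) : _ ≤ P) ht
    exact hb ((Ideal.add_mem_iff_left P (P.mul_mem_left c htP)).1 hmem)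

theorem stable {R : Type*} [CommRing R] [IsPrincipalIdealRing R] (a b c : R)
    (h : ∃ x y z, a * x + b * y + c * z = 1) : ∃ s t, IsCoprime (a + c * s) (b + c * t) := by
  classical
  obtain ⟨x, y, z, hxyz⟩ := h
  have hfin : {P ∈ minimalPrimes R | a ∈ P → c ∉ P}.Finite :=
    (Ideal.finite_minimalPrimes_of_isNoetherianRing R ⊥).subset (fun P hP => hP.1)
  obtain ⟨s, hs⟩ := avoid hfin.toFinset (fun P hP => ((hfin.mem_toFinset.1 hP).1).1.1)
    (fun P hP Q hQ hle => le_antisymm hle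
      (((hfin.mem_toFinset.1 hQ).1).2 ((hfin.mem_toFinset.1 hP).1).1 hle)) a c
    (fun P hP => (hfin.mem_toFinset.1 hP).2)
  have hfin2 : {P : Ideal R | P.IsMaximal ∧ a + c * s ∈ P ∧ c ∉ P}.Finite := by
    refine (Ideal.finite_minimalPrimes_of_isNoetherianRing R (Ideal.span {a + c * s})).subset ?_
    rintro P ⟨hP, hu, hc⟩
    refine ⟨⟨hP.isPrime, by simpa [Ideal.span_le] using hu⟩, ?_⟩
    rintro Q ⟨hQ, hQu⟩ hQP
    have hQu' : a + c * s ∈ Q := hQu (Ideal.mem_span_singleton_self _)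
    rcases Ring.krullDimLE_one_iff.1 (inferInstance : Ring.KrullDimLE 1 R) Q hQ with hm | hm
    · exact absurd hQu' (hs Q (hfin.mem_toFinset.2 ⟨hm, fun _ hcQ => hc (hQP hcQ)⟩))
    · exact (hm.eq_of_le hP.ne_top hQP).ge
  obtain ⟨t, ht⟩ := avoid hfin2.toFinset (fun P hP => (hfin2.mem_toFinset.1 hP).1.isPrime)
    (fun P hP Q hQ hle => ((hfin2.mem_toFinset.1 hP).1).eq_of_le
      (hfin2.mem_toFinset.1 hQ).1.ne_top hle) b c
    (fun P hP _ => (hfin2.mem_toFinset.1 hP).2.2)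
  refine ⟨s, t, ?_⟩
  rw [← Ideal.isCoprime_span_singleton_iff, Ideal.isCoprime_iff_sup_eq]
  by_contra hne
  obtain ⟨P, hP, hle⟩ := Ideal.exists_le_maximal _ hne
  have h1 : a + c * s ∈ P := hle (Ideal.mem_sup_left (Ideal.mem_span_singleton_self _))
  have h2 : b + c * t ∈ P := hle (Ideal.mem_sup_right (Ideal.mem_span_singleton_self _))
  by_cases hc : c ∈ P
  · have ha : a ∈ P := (Ideal.add_mem_iff_left P (P.mul_mem_right s hc)).1 h1
    have hb : b ∈ P := (Ideal.add_mem_iff_left P (P.mul_mem_right t hc)).1 h2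
    apply hP.ne_top
    rw [Ideal.eq_top_iff_one, ← hxyz]
    exact P.add_mem (P.add_mem (P.mul_mem_right _ ha) (P.mul_mem_right _ hb))
      (P.mul_mem_right _ hc)
  · exact ht P (hfin2.mem_toFinset.2 ⟨hP, h1, hc⟩) h2

/-- The Hermite property. -/
theorem hermite {R : Type*} [CommRing R] [IsPrincipalIdealRing R] (a b : R) :
    ∃ x y, IsCoprime x y ∧ (a * x + b * y ∣ a) ∧ (a * x + b * y ∣ b) := by
  obtain ⟨d, hd⟩ := (IsPrincipalIdealRing.principal (Ideal.span {a, b})).principal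
  rw [Ideal.submodule_span_eq] at hd
  have ha : a ∈ Ideal.span {d} := hd ▸ Ideal.subset_span (by simp)
  have hb : b ∈ Ideal.span {d} := hd ▸ Ideal.subset_span (by simp)
  have hd' : d ∈ Ideal.span {a, b} := hd ▸ Ideal.mem_span_singleton_self d
  obtain ⟨x0, y0, hxy⟩ := Ideal.mem_span_pair.1 hd'
  obtain ⟨a0, ha0⟩ := Ideal.mem_span_singleton.1 ha
  obtain ⟨b0, hb0⟩ := Ideal.mem_span_singleton.1 hb
  obtain ⟨s, t, x, y, h⟩ := stable a0 b0 (1 - a0 * x0 - b0 * y0) ⟨x0, y0, 1, by ring⟩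
  have hz : d * (1 - a0 * x0 - b0 * y0) = 0 := by
    linear_combination -hxy - x0 * (-ha0) + y0 * hb0
  have hdd : a * x + b * y = d := by
    linear_combination x * ha0 + y * hb0 + d * h - (x * s + y * t) * hz
  exact ⟨x, y, ⟨a0 + (1 - a0 * x0 - b0 * y0) * s, b0 + (1 - a0 * x0 - b0 * y0) * t, by linear_combination h⟩, hdd ▸ ⟨a0, ha0⟩, hdd ▸ ⟨b0, hb0⟩⟩

/-- Equivalence of matrices. -/
def Eqv {R : Type*} [CommRing R] {m n : ℕ} (A B : Matrix (Fin m) (Fin n) R) : Prop :=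
  ∃ (P : Matrix (Fin m) (Fin m) R) (Q : Matrix (Fin n) (Fin n) R),
    IsUnit P ∧ IsUnit Q ∧ P * A * Q = B

theorem Eqv.refl {R : Type*} [CommRing R] {m n : ℕ} (A : Matrix (Fin m) (Fin n) R) : Eqv A A :=
  ⟨1, 1, isUnit_one, isUnit_one, by simp⟩

theorem Eqv.trans {R : Type*} [CommRing R] {m n : ℕ} {A B C : Matrix (Fin m) (Fin n) R}
    (h1 : Eqv A B) (h2 : Eqv B C) : Eqv A C := by
  obtain ⟨P, Q, hP, hQ, rfl⟩ := h1
  obtain ⟨P', Q', hP', hQ', rfl⟩ := h2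
  exact ⟨P' * P, Q * Q', hP'.mul hP, hQ.mul hQ', by simp only [Matrix.mul_assoc]⟩

/-- An invertible matrix with prescribed first column supported on two entries. -/
theorem exists_unit {R : Type*} [CommRing R] {n : ℕ} (j : Fin (n + 1)) (hj : j ≠ 0) (x y : R)
    (h : IsCoprime x y) : ∃ Q : Matrix (Fin (n + 1)) (Fin (n + 1)) R, IsUnit Q ∧
      ∀ k, Q k 0 = if k = 0 then x else if k = j then y else 0 := by
  classical
  obtain ⟨p, q, hpq⟩ := h
  let S := fun (i k : Fin (n + 1)) (r : R) => Matrix.single i k r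
  let Q : Matrix (Fin (n + 1)) (Fin (n + 1)) R :=
    1 + S 0 0 (x - 1) + S 0 j (-q) + S j 0 y + S j j (p - 1)
  let Q' : Matrix (Fin (n + 1)) (Fin (n + 1)) R :=
    1 + S 0 0 (p - 1) + S 0 j q + S j 0 (-y) + S j j (x - 1)
  have hQ : Q * Q' = 1 := by
    have : Q * Q' = 1 + S 0 0 (p * x + q * y - 1) + S j j (p * x + q * y - 1) := by
      simp only [Q, Q', S, add_mul, mul_add, one_mul, mul_one, Matrix.single_mul_single_same,
        Matrix.single_mul_single_of_ne _ _ _ _ hj, Matrix.single_mul_single_of_ne _ _ _ _ hj.symm]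
      ext i k
      simp only [Matrix.add_apply, Matrix.single_apply, Matrix.zero_apply]
      split_ifs <;> ring
    rw [this, hpq]
    simp [S]
  refine ⟨Q, IsUnit.of_mul_eq_one _ hQ, fun k => ?_⟩
  by_cases hk : k = 0
  · subst hk
    simp [Q, S, Matrix.single_apply, hj, hj.symm]
  · by_cases hkj : k = j
    · subst hkj
      simp [Q, S, Matrix.single_apply, hj, hj.symm]
    · simp [Q, S, Matrix.single_apply, hj, hk, hkj, Ne.symm hk, Ne.symm hkj]

/-- The top left entry is maximal (w.r.t. the ideal generated) in the equivalence class. -/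
def Mx {R : Type*} [CommRing R] {m n : ℕ} (A : Matrix (Fin (m + 1)) (Fin (n + 1)) R) : Prop :=
  ∀ B, Eqv A B → B 0 0 ∣ A 0 0 → A 0 0 ∣ B 0 0

theorem exists_mx {R : Type*} [CommRing R] [IsPrincipalIdealRing R] {m n : ℕ}
    (A : Matrix (Fin (m + 1)) (Fin (n + 1)) R) : ∃ B, Eqv A B ∧ Mx B := by
  obtain ⟨I, ⟨B, hAB, rfl⟩, hmax⟩ := set_has_maximal_iff_noetherian.mpr
    (inferInstance : IsNoetherian R R)
    {I : Ideal R | ∃ B, Eqv A B ∧ I = Ideal.span {B 0 0}} ⟨_, A, Eqv.refl A, rfl⟩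
  refine ⟨B, hAB, fun C hBC hdvd => ?_⟩
  have h1 := hmax _ ⟨C, hAB.trans hBC, rfl⟩
  have h2 : Ideal.span {B 0 0} ≤ Ideal.span {C 0 0} := Ideal.span_singleton_le_span_singleton.2 hdvd
  rw [← Ideal.span_singleton_le_span_singleton]
  by_contra hcon
  exact h1 (lt_of_le_not_ge h2 hcon)

theorem Mx.of_eqv {R : Type*} [CommRing R] {m n : ℕ}
    {A B : Matrix (Fin (m + 1)) (Fin (n + 1)) R} (hA : Mx A) (h : Eqv A B) (h0 : B 0 0 = A 0 0) :
    Mx B := by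
  intro C hC hd
  rw [h0] at hd ⊢
  exact hA C (h.trans hC) hd

theorem Mx.row {R : Type*} [CommRing R] [IsPrincipalIdealRing R] {m n : ℕ}
    {A : Matrix (Fin (m + 1)) (Fin (n + 1)) R} (hA : Mx A) (j : Fin (n + 1)) :
    A 0 0 ∣ A 0 j := by
  classical
  by_cases hj : j = 0
  · subst hj; exact dvd_rfl
  obtain ⟨x, y, hxy, h1, h2⟩ := hermite (A 0 0) (A 0 j)
  obtain ⟨Q, hQ, hQ0⟩ := exists_unit j hj x y hxy
  have he : ((1 : Matrix (Fin (m + 1)) (Fin (m + 1)) R) * A * Q) 0 0 = A 0 0 * x + A 0 j * y := by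
    rw [Matrix.one_mul, Matrix.mul_apply, Finset.sum_eq_add (0 : Fin (n + 1)) j (Ne.symm hj)]
    · simp [hQ0, hj]
    · rintro k - ⟨hk, hk'⟩
      simp [hQ0, hk, hk']
    · simp
    · simp
  have := hA _ ⟨1, Q, isUnit_one, hQ, rfl⟩ (he ▸ h1)
  rw [he] at this
  exact this.trans h2

theorem Eqv.transpose {R : Type*} [CommRing R] {m n : ℕ} {A B : Matrix (Fin m) (Fin n) R}
    (h : Eqv A B) : Eqv A.transpose B.transpose := by
  obtain ⟨P, Q, hP, hQ, rfl⟩ := h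
  exact ⟨Q.transpose, P.transpose, (Matrix.isUnit_transpose _).2 hQ, (Matrix.isUnit_transpose _).2 hP,
    by simp [Matrix.transpose_mul, Matrix.mul_assoc]⟩

theorem Mx.col {R : Type*} [CommRing R] [IsPrincipalIdealRing R] {m n : ℕ}
    {A : Matrix (Fin (m + 1)) (Fin (n + 1)) R} (hA : Mx A) (i : Fin (m + 1)) :
    A 0 0 ∣ A i 0 := by
  have : Mx A.transpose := by
    intro B hB hd
    have := hB.transpose
    rw [Matrix.transpose_transpose] at this
    exact hA _ this hd
  exact this.row i

/-- Shear matrix with first row `(1, c)`. -/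
theorem exists_shear {R : Type*} [CommRing R] {n : ℕ} (c : Fin (n + 1) → R) (hc : c 0 = 0) :
    ∃ Q : Matrix (Fin (n + 1)) (Fin (n + 1)) R, IsUnit Q ∧
      ∀ {m : ℕ} (A : Matrix (Fin m) (Fin (n + 1)) R) i j, (A * Q) i j = A i j + A i 0 * c j := by
  classical
  let E := Matrix.vecMulVec (Pi.single (0 : Fin (n + 1)) (1 : R)) c
  have hE : E * E = 0 := by
    simp [E, Matrix.vecMulVec_mul_vecMulVec, hc]
  refine ⟨1 + E, IsUnit.of_mul_eq_one (1 - E) ?_, fun A i j => ?_⟩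
  · simp [add_mul, mul_sub, hE]
  · rw [Matrix.mul_add, Matrix.mul_one, Matrix.add_apply]
    congr 1
    simp [E, Matrix.mul_apply, Matrix.vecMulVec_apply, Pi.single_apply]

/-- Clearing the first row. -/
theorem clear_row {R : Type*} [CommRing R] {m n : ℕ}
    (A : Matrix (Fin (m + 1)) (Fin (n + 1)) R) (h : ∀ j, A 0 0 ∣ A 0 j) :
    ∃ B, Eqv A B ∧ (∀ i, B i 0 = A i 0) ∧ ∀ j, j ≠ 0 → B 0 j = 0 := by
  classical
  choose c hc using h
  obtain ⟨Q, hQ, hQA⟩ := exists_shear (fun j => if j = 0 then 0 else - c j) (by simp)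
  refine ⟨A * Q, ⟨1, Q, isUnit_one, hQ, by simp⟩, fun i => by simp [hQA], fun j hj => ?_⟩
  rw [hQA, hc j]
  simp [hj]

/-- Block diagonal `1 × 1` plus the rest. -/
def blk {R : Type*} [CommRing R] {m n : ℕ} (a : R) (A : Matrix (Fin m) (Fin n) R) :
    Matrix (Fin (m + 1)) (Fin (n + 1)) R :=
  fun i j => Fin.cases (Fin.cases a (fun _ => 0) j) (fun i' => Fin.cases 0 (fun j' => A i' j') j) i

theorem blk_mul {R : Type*} [CommRing R] {m n k : ℕ} (a b : R) (A : Matrix (Fin m) (Fin n) R)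
    (B : Matrix (Fin n) (Fin k) R) : blk a A * blk b B = blk (a * b) (A * B) := by
  ext i j
  rw [Matrix.mul_apply, Fin.sum_univ_succ]
  refine Fin.cases ?_ (fun i => ?_) i <;> refine Fin.cases ?_ (fun j => ?_) j <;>
    simp [blk, Matrix.mul_apply]

theorem blk_one {R : Type*} [CommRing R] {m : ℕ} :
    blk (1 : R) (1 : Matrix (Fin m) (Fin m) R) = 1 := by
  ext i j
  refine Fin.cases ?_ (fun i => ?_) i <;> refine Fin.cases ?_ (fun j => ?_) j <;>
    simp [blk, Matrix.one_apply, Fin.succ_ne_zero, (Fin.succ_ne_zero _).symm]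

theorem blk_unit {R : Type*} [CommRing R] {m : ℕ} {P : Matrix (Fin m) (Fin m) R} (h : IsUnit P) :
    IsUnit (blk 1 P) := by
  obtain ⟨P', hP'⟩ := h.exists_right_inv
  exact IsUnit.of_mul_eq_one (blk 1 P') (by rw [blk_mul, hP', one_mul, blk_one])

theorem reduce {R : Type*} [CommRing R] [IsPrincipalIdealRing R] {m n : ℕ}
    (A : Matrix (Fin (m + 1)) (Fin (n + 1)) R) :
    ∃ a N, Eqv A (blk a N) ∧ ∀ (i : Fin m) (j : Fin n), a ∣ N i j := by
  classical
  obtain ⟨B, hAB, hB⟩ := exists_mx A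
  obtain ⟨C, hBC, hC0, hCr⟩ := clear_row B hB.row
  have hC := hB.of_eqv hBC (hC0 0)
  obtain ⟨D, hCD, hD0, hDr⟩ := clear_row C.transpose hC.col
  have hCD' := hCD.transpose
  rw [Matrix.transpose_transpose] at hCD'
  have hD : Mx D.transpose := hC.of_eqv hCD' (hD0 0)
  have hblk : D.transpose = blk (D 0 0) (fun i j => D j.succ i.succ) := by
    ext i j
    refine Fin.cases ?_ (fun i => ?_) i <;> refine Fin.cases ?_ (fun j => ?_) j
    · simp [blk]
    · simpa [blk, hD0] using hCr _ (Fin.succ_ne_zero j)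
    · simpa [blk] using hDr _ (Fin.succ_ne_zero i)
    · simp [blk]
  refine ⟨D 0 0, fun i j => D j.succ i.succ, hblk ▸ (hAB.trans hBC).trans hCD', fun i j => ?_⟩
  obtain ⟨P, hP, hP0⟩ := exists_unit (R := R) i.succ (Fin.succ_ne_zero i) 1 1 isCoprime_one_left
  have hrow : ∀ k, (P.transpose * D.transpose * (1 : Matrix (Fin (n + 1)) (Fin (n + 1)) R)) 0 k = D k 0 + D k i.succ := by
    intro k
    rw [Matrix.mul_one, Matrix.mul_apply,
      Finset.sum_eq_add (0 : Fin (m + 1)) i.succ (Fin.succ_ne_zero i).symm]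
    · simp [hP0, Fin.succ_ne_zero]
    · rintro l - ⟨hl, hl'⟩
      simp [hP0, hl, hl']
    · simp
    · simp
  have h00 : (P.transpose * D.transpose * (1 : Matrix (Fin (n + 1)) (Fin (n + 1)) R)) 0 0 = D 0 0 := by
    rw [hrow, hDr _ (Fin.succ_ne_zero i), add_zero]
  have hE := hD.of_eqv ⟨P.transpose, 1, (Matrix.isUnit_transpose _).2 hP, isUnit_one, rfl⟩ h00
  have := hE.row j.succ
  rw [h00, hrow] at this
  have hz : D j.succ 0 = 0 := by
    rw [hD0]; exact hCr _ (Fin.succ_ne_zero j)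
  rwa [hz, zero_add] at this

theorem dvd_mul_mul {R : Type*} [CommRing R] {m n : ℕ} (a : R) (N : Matrix (Fin m) (Fin n) R)
    (h : ∀ i j, a ∣ N i j) (P : Matrix (Fin m) (Fin m) R) (Q : Matrix (Fin n) (Fin n) R) (i j) :
    a ∣ (P * N * Q) i j := by
  rw [Matrix.mul_apply]
  refine Finset.dvd_sum fun k _ => Dvd.dvd.mul_right ?_ _
  rw [Matrix.mul_apply]
  exact Finset.dvd_sum fun l _ => Dvd.dvd.mul_left (h _ _) _

end SNFaux


/-- Every matrix over a commutative ring in which every ideal is principal admits a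
Smith normal form: there are invertible `P ∈ GL_m(R)`, `Q ∈ GL_n(R)` with `P * M * Q`
diagonal and the diagonal entries forming a divisibility chain. -/
theorem stmt_15 {R : Type*} [CommRing R] [IsPrincipalIdealRing R] {m n : ℕ}
    (M : Matrix (Fin m) (Fin n) R) :
    ∃ (P : Matrix (Fin m) (Fin m) R) (Q : Matrix (Fin n) (Fin n) R),
      IsUnit P ∧ IsUnit Q ∧
      (∀ (i : Fin m) (j : Fin n), (i : ℕ) ≠ (j : ℕ) → (P * M * Q) i j = 0) ∧
      (∀ (i i' : Fin m) (j j' : Fin n), (i : ℕ) = (j : ℕ) → (i' : ℕ) = (j' : ℕ) →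
        (i' : ℕ) = (i : ℕ) + 1 → (P * M * Q) i j ∣ (P * M * Q) i' j') := by
  induction m generalizing n with
  | zero => exact ⟨1, 1, isUnit_one, isUnit_one, fun i => i.elim0, fun i => i.elim0⟩
  | succ m ih =>
    cases n with
    | zero => exact ⟨1, 1, isUnit_one, isUnit_one, fun _ j => j.elim0, fun _ _ j => j.elim0⟩
    | succ n =>
      obtain ⟨a, N, hMN, hdvd⟩ := SNFaux.reduce M
      obtain ⟨P, Q, hP, hQ, hdiag, hchain⟩ := ih N
      have hE : SNFaux.Eqv (SNFaux.blk a N) (SNFaux.blk a (P * N * Q)) :=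
        ⟨SNFaux.blk 1 P, SNFaux.blk 1 Q, SNFaux.blk_unit hP, SNFaux.blk_unit hQ, by
          rw [SNFaux.blk_mul, SNFaux.blk_mul, one_mul, mul_one]⟩
      obtain ⟨P', Q', hP', hQ', he⟩ := hMN.trans hE
      have hall := SNFaux.dvd_mul_mul a N hdvd P Q
      refine ⟨P', Q', hP', hQ', ?_, ?_⟩
      · rw [he]
        intro i j
        refine Fin.cases ?_ (fun i => ?_) i <;> refine Fin.cases ?_ (fun j => ?_) j
        · intro h; exact absurd rfl h
        · intro _; rfl
        · intro _; rfl
        · intro h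
          exact hdiag i j (by simpa using h)
      · rw [he]
        intro i i' j j'
        refine Fin.cases ?_ (fun i' => ?_) i'
        · intro _ _ h; simp at h
        refine Fin.cases ?_ (fun j' => ?_) j'
        · intro _ h; simp at h
        refine Fin.cases ?_ (fun i => ?_) i <;> refine Fin.cases ?_ (fun j => ?_) j
        · intro _ _ _
          exact hall i' j'
        · intro h; simp at h
        · intro h; simp at h
        · intro h1 h2 h3
          exact hchain i i' j j' (by simpa using h1) (by simpa using h2) (by simpa using h3)
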